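/- Let λ = ∞u·w₁ be a left-infinite word and ρ = w₂·v∞ a right-infinite word over a finite alphabet A, given in canonical form, where u = yz and v = zy for some word z (possibly empty) and some nonempty word y, so that u and v are conjugate with common length p = |u| = |v| ≥ 1. Set m = max(|w₁|, |w₂|) and M = m + p − 1. Then for every natural number n, rog_{λ,ρ}(n) ≤ M. -/

import Mathlib

/-- The suffix of length `n` of the left-infinite word `⋯ (lam 2)(lam 1)(lam 0)`. -/
def lSuffix {A : Type*} (lam : ℕ → A) (n : ℕ) : List A := (List.range n).reverse.map lam

/-- The prefix of length `n` of the right-infinite word `(rho 0)(rho 1)(rho 2) ⋯`. -/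
def rPrefix {A : Type*} (rho : ℕ → A) (n : ℕ) : List A := (List.range n).map rho

/-- The left overlap gap between two finite words. -/
noncomputable def logGap {A : Type*} (u v : List A) : ℕ :=
  sInf {n | ∃ x x' : List A, x.length = n ∧ x'.length = n ∧ u ++ x = x' ++ v}

/-- The right overlap gap between two finite words. -/
noncomputable def rogGap {A : Type*} (u v : List A) : ℕ :=
  sInf {n | ∃ x x' : List A, x.length = n ∧ x'.length = n ∧ x ++ u = v ++ x'}

/-- The overlap gap between two finite words. -/
noncomputable def ogGap {A : Type*} (u v : List A) : ℕ := min (logGap u v) (rogGap u v)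

/-- `lam` is the left-infinite word `∞u·w = ⋯uuuw`. -/
def IsLeftUP {A : Type*} (lam : ℕ → A) (u w : List A) : Prop :=
  ∀ k : ℕ, lSuffix lam (w.length + k * u.length) = (List.replicate k u).flatten ++ w

/-- `rho` is the right-infinite word `w·u∞ = wuuu⋯`. -/
def IsRightUP {A : Type*} (rho : ℕ → A) (w u : List A) : Prop :=
  ∀ k : ℕ, rPrefix rho (w.length + k * u.length) = w ++ (List.replicate k u).flatten

/-- A finite word is primitive if it is nonempty and not a proper power. -/
def Primitive {A : Type*} (u : List A) : Prop :=
  u ≠ [] ∧ ∀ (t : List A) (k : ℕ), u = (List.replicate k t).flatten → k = 1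

/-!
Beyond `w₁` and `w₂`, both words read off the same bi-infinite periodic word `⋯uuu⋯`, at positions
that differ by a fixed shift. Overlapping `λ_n` and `ρ_n` with a gap `g ≥ max |w₁| |w₂|` compares
only letters from these periodic parts, and they agree as soon as `g` lies in a suitable residue
class modulo `|u|`; any `|u|` consecutive integers contain such a `g`.
-/

section

variable {A : Type*}

/-- The bi-infinite periodic word `⋯uuu⋯`, positioned so that a copy of `u` starts at `0`. -/
def biinfinitePower (u : List A) (hu : u ≠ []) (k : ℤ) : A :=
  u[k.natMod u.length]'(Int.natMod_lt (mt List.length_eq_zero_iff.mp hu))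

theorem biinfinitePower_of_lt {u : List A} (hu : u ≠ []) {i : ℕ} (hi : i < u.length) :
    biinfinitePower u hu i = u[i] := by
  have hmod : (i : ℤ).natMod u.length = i := Nat.mod_eq_of_lt hi
  simp only [biinfinitePower, hmod]

theorem biinfinitePower_periodic {u : List A} (hu : u ≠ []) :
    Function.Periodic (biinfinitePower u hu) u.length := fun k => by
  simp only [biinfinitePower, Int.natMod, Int.add_emod_right]

theorem biinfinitePower_rotate {u : List A} (r : ℕ) (hu : u ≠ []) (hr : u.rotate r ≠ []) (k : ℤ) :
    biinfinitePower (u.rotate r) hr k = biinfinitePower u hu (k + r) := by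
  have hlen : (u.length : ℤ) ≠ 0 := by simpa using hu
  have hmod : (k.natMod u.length + r) % u.length = (k + r).natMod u.length := by
    zify
    simp only [Int.natMod, Int.toNat_of_nonneg (Int.emod_nonneg _ hlen), Int.emod_add_emod]
  simp only [biinfinitePower, List.length_rotate, List.getElem_rotate, hmod]

theorem getElem_flatten_replicate {u : List A} (hu : u ≠ []) {k i : ℕ}
    (h : i < (List.replicate k u).flatten.length) :
    (List.replicate k u).flatten[i] = biinfinitePower u hu i := by
  induction k generalizing i with
  | zero => simp at h
  | succ k ih =>
    simp only [List.replicate_succ, List.flatten_cons, List.getElem_append]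
    split_ifs with hi
    · rw [biinfinitePower_of_lt hu hi]
    · rw [ih, Nat.cast_sub (not_lt.mp hi), (biinfinitePower_periodic hu).sub_eq]

@[simp]
theorem length_lSuffix (lam : ℕ → A) (n : ℕ) : (lSuffix lam n).length = n := by
  simp [lSuffix]

@[simp]
theorem length_rPrefix (rho : ℕ → A) (n : ℕ) : (rPrefix rho n).length = n := by
  simp [rPrefix]

@[simp]
theorem getElem_lSuffix (lam : ℕ → A) {n i : ℕ} (h : i < (lSuffix lam n).length) :
    (lSuffix lam n)[i] = lam (n - 1 - i) := by
  simp [lSuffix]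

@[simp]
theorem getElem_rPrefix (rho : ℕ → A) {n i : ℕ} (h : i < (rPrefix rho n).length) :
    (rPrefix rho n)[i] = rho i := by
  simp [rPrefix]

theorem IsRightUP.apply_eq_biinfinitePower {rho : ℕ → A} {w v : List A} (h : IsRightUP rho w v)
    (hv : v ≠ []) {i : ℕ} (hi : w.length ≤ i) :
    rho i = biinfinitePower v hv (i - w.length) := by
  have hpos := List.length_pos_iff.mpr hv
  have hlt : i < (rPrefix rho (w.length + (i + 1) * v.length)).length := by
    rw [length_rPrefix]
    nlinarith
  calc rho i
      = (rPrefix rho (w.length + (i + 1) * v.length))[i] := (getElem_rPrefix rho hlt).symm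
    _ = biinfinitePower v hv (i - w.length : ℕ) := by
      simp only [h (i + 1), List.getElem_append_right hi, getElem_flatten_replicate hv]
    _ = biinfinitePower v hv (i - w.length) := by rw [Nat.cast_sub hi]

theorem IsLeftUP.apply_eq_biinfinitePower {lam : ℕ → A} {u w : List A} (h : IsLeftUP lam u w)
    (hu : u ≠ []) {j : ℕ} (hj : w.length ≤ j) :
    lam j = biinfinitePower u hu (w.length - 1 - j) := by
  have hpos := List.length_pos_iff.mpr hu
  have hlt : j < (j + 1) * u.length := by nlinarith
  obtain ⟨i, hi⟩ : ∃ i, i + j + 1 = w.length + (j + 1) * u.length :=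
    ⟨w.length + (j + 1) * u.length - (j + 1), by omega⟩
  have hi_suffix : i < (lSuffix lam (w.length + (j + 1) * u.length)).length := by
    rw [length_lSuffix]
    omega
  have hi_power : i < (List.replicate (j + 1) u).flatten.length := by
    suffices i < (j + 1) * u.length by simpa
    omega
  calc lam j
      = lam (w.length + (j + 1) * u.length - 1 - i) := by congr 1; omega
    _ = (lSuffix lam (w.length + (j + 1) * u.length))[i] := (getElem_lSuffix lam hi_suffix).symm
    _ = biinfinitePower u hu i := by
      simp only [h (j + 1), List.getElem_append_left hi_power, getElem_flatten_replicate hu]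
    _ = biinfinitePower u hu (w.length - 1 - j + (j + 1 : ℕ) * u.length) := by
      congr 1
      zify at hi
      push_cast
      linarith
    _ = biinfinitePower u hu (w.length - 1 - j) := (biinfinitePower_periodic hu).nat_mul _ _

theorem rogGap_le_of_take_eq_drop {u v : List A} {g : ℕ} (hlen : u.length = v.length)
    (h : u.take (u.length - g) = v.drop g) : rogGap u v ≤ g := by
  have hmin : rogGap u v ≤ min g v.length := by
    refine Nat.sInf_le ⟨v.take g, u.drop (u.length - g), by simp, by grind, ?_⟩
    calc v.take g ++ u
        = v.take g ++ (u.take (u.length - g) ++ u.drop (u.length - g)) := by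
          rw [List.take_append_drop]
      _ = v ++ u.drop (u.length - g) := by
          rw [h, ← List.append_assoc, List.take_append_drop]
  exact hmin.trans (min_le_left _ _)

theorem rogGap_lSuffix_rPrefix_le_of_forall_eq {lam rho : ℕ → A} {n g : ℕ}
    (h : ∀ i, g ≤ i → i < n → rho i = lam (n - 1 + g - i)) :
    rogGap (lSuffix lam n) (rPrefix rho n) ≤ g := by
  refine rogGap_le_of_take_eq_drop (by simp) (List.ext_getElem (by simp) fun i hi _ => ?_)
  have hin : i < n - g := by simpa using hi
  simp only [List.getElem_take, List.getElem_drop, getElem_lSuffix, getElem_rPrefix]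
  rw [h (g + i) (by omega) (by omega)]
  congr 1
  omega

theorem rogGap_le_of_periodic {lam rho : ℕ → A} {f : ℤ → A} {p m : ℕ} {a b : ℤ}
    (hp : 0 < p) (hf : Function.Periodic f p)
    (hlam : ∀ j, m ≤ j → lam j = f (a - j)) (hrho : ∀ i, m ≤ i → rho i = f (i + b)) (n : ℕ) :
    rogGap (lSuffix lam n) (rPrefix rho n) ≤ m + p - 1 := by
  -- The positions `i + b` and `a - (n - 1 + g - i)` of `f` agree modulo `p` exactly when
  -- `g ≡ a - b - (n - 1)`, whatever `i` is.
  obtain ⟨q, ⟨hmg, hgp⟩, -⟩ :=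
    existsUnique_add_zsmul_mem_Ico (Int.natCast_pos.mpr hp) (a - b - (n - 1)) m
  obtain ⟨g, hg⟩ := Int.eq_ofNat_of_zero_le ((Int.natCast_nonneg m).trans hmg)
  rw [hg] at hmg hgp
  have hg_le : g ≤ m + p - 1 := by omega
  refine (rogGap_lSuffix_rPrefix_le_of_forall_eq fun i hgi hin => ?_).trans hg_le
  calc rho i
      = f (i + b) := hrho i (by omega)
    _ = f (i + b - q • (p : ℤ)) := (hf.sub_zsmul_eq q).symm
    _ = f (a - (n - 1 + g - i : ℕ)) := by congr 1; omega
    _ = lam (n - 1 + g - i) := (hlam _ (by omega)).symm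

theorem rog_le_of_ult_periodic_general {lam rho : ℕ → A} {u v w₁ w₂ : List A}
    (hu : u ≠ []) (huv : u ~r v) (hlam : IsLeftUP lam u w₁) (hrho : IsRightUP rho w₂ v) (n : ℕ) :
    rogGap (lSuffix lam n) (rPrefix rho n) ≤ max w₁.length w₂.length + u.length - 1 := by
  obtain ⟨r, rfl⟩ := huv
  have hv : u.rotate r ≠ [] := mt List.rotate_eq_nil_iff.mp hu
  refine rogGap_le_of_periodic (List.length_pos_iff.mpr hu) (biinfinitePower_periodic hu)
    (a := w₁.length - 1) (b := r - w₂.length) (fun j hj => ?_) (fun i hi => ?_) n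
  · exact hlam.apply_eq_biinfinitePower hu (le_of_max_le_left hj)
  · rw [hrho.apply_eq_biinfinitePower hv (le_of_max_le_right hi), biinfinitePower_rotate r hu,
      sub_add_eq_add_sub, add_sub_assoc]

end

/-- For `λ = ∞u·w₁` and `ρ = w₂·v∞` in canonical form with `u = yz`, `v = zy`
conjugate words, `rog(n) ≤ M` where `M = max(|w₁|,|w₂|) + |u| - 1`. -/
theorem rog_le_of_ult_periodic {A : Type*} [Fintype A] [Nonempty A]
    (lam rho : ℕ → A) (u v w₁ w₂ y z : List A)
    (hy : y ≠ []) (hu : u = y ++ z) (hv : v = z ++ y)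
    (hlam : IsLeftUP lam u w₁) (huprim : Primitive u)
    (hcanl : w₁ ≠ [] → w₁.head? ≠ u.head?)
    (hrho : IsRightUP rho w₂ v) (hvprim : Primitive v)
    (hcanr : w₂ ≠ [] → w₂.getLast? ≠ v.getLast?) :
    ∀ n : ℕ, rogGap (lSuffix lam n) (rPrefix rho n) ≤
      max w₁.length w₂.length + u.length - 1 := by
  subst hu hv
  exact rog_le_of_ult_periodic_general (by simp [hy]) List.isRotated_append hlam hrho
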